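/- Let u₁, …, uₙ ∈ Σ* and let N be a natural number with N > |u₁| + … + |uₙ|. Then ⧢₂ⁿ(u₁, …, uₙ) = { h(I(v₁, …, vₙ)) : for each i, vᵢ ∈ $*uᵢ$* and |vᵢ| = N }, i.e. the n-ary literal shuffle equals the set of h-images of perfect interleavings of paddings of the uᵢ by dollar signs on both sides to the common length N. -/

import Mathlib

/-!
Erasing the dollars of an interleaving leaves the concatenation, over the columns `j < L`, of the
letters that the padded words carry in column `j` (`reduceOption_interleave_dollarPad`).  The word
`uᵢ` starting at offset `kᵢ` has letters only in the columns `[kᵢ, kᵢ + |uᵢ|)`, so both sides of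
the theorem are sets `literalShuffle us L` of words obtained from offsets with `kᵢ + |uᵢ| ≤ L`,
once with `L = n · maxᵢ |uᵢ|` and once with `L = N`, and both lengths are at least `∑ |uᵢ|`.

The set does not depend on `L ≥ ∑ |uᵢ|`.  It grows with `L`, since columns appended on the right
contain only dollars (`shuffleWord_of_le`).  Conversely, if `L > ∑ |uᵢ|`, then some column meets
none of the words; deleting it, that is moving one step to the left every word that starts after
it, shortens the padding by one without changing the erased word (`exists_offsets_pred`).
-/


/-!
Common definitions.

Words over an alphabet `β` are modelled as `List β`.  The alphabet
`Σ ∪ {$}` is modelled as `Option β`, where `none` plays the role of the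
dollar sign `$` and `some x` the role of a letter `x ∈ Σ`.  The erasing
homomorphism `h` (with `h($) = ε`, `h(x) = x`) is `List.reduceOption`.
-/

/-- Perfect interleaving `I(v₁, …, vₙ)` of equal-length words, read column-wise. -/
def interleave {β : Type*} (vs : List (List β)) : List β :=
  vs.transpose.flatten

/-- `$^k u $^r`, the two-sided dollar padding of the word `u`. -/
def dollarPad {β : Type*} (k : ℕ) (u : List β) (r : ℕ) : List (Option β) :=
  List.replicate k none ++ u.map some ++ List.replicate r none

/-- The `n`-ary initial literal shuffle `⧢₁ⁿ(u₁, …, uₙ)`: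
pad each word with a fresh symbol (`none`) to the maximal length `N`,
interleave, and erase the fresh symbols. -/
def shuffle1 {β : Type*} {n : ℕ} (us : Fin n → List β) : List β :=
  (interleave (List.ofFn fun i =>
    (us i).map some ++
      List.replicate ((Finset.univ.sup fun j => (us j).length) - (us i).length)
        (none : Option β))).reduceOption

/-- The `n`-ary literal shuffle `⧢₂ⁿ(u₁, …, uₙ)`:
all erased interleavings of paddings `$^k uᵢ $^{r-k}` with `r = n·N - |uᵢ|`. -/
def shuffle2 {β : Type*} {n : ℕ} (us : Fin n → List β) : Set (List β) :=
  { w | ∃ k : Fin n → ℕ,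
      (∀ i, k i ≤ n * (Finset.univ.sup fun j => (us j).length) - (us i).length) ∧
      w = (interleave (List.ofFn fun i =>
        dollarPad (k i) (us i)
          (n * (Finset.univ.sup fun j => (us j).length) - (us i).length - k i))).reduceOption }

/-- Extension of `⧢₁ⁿ` to languages. -/
def shuffle1L {β : Type*} {n : ℕ} (Ls : Fin n → Set (List β)) : Set (List β) :=
  { w | ∃ us : Fin n → List β, (∀ i, us i ∈ Ls i) ∧ w = shuffle1 us }

/-- Extension of `⧢₂ⁿ` to languages. -/
def shuffle2L {β : Type*} {n : ℕ} (Ls : Fin n → Set (List β)) : Set (List β) :=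
  { w | ∃ us : Fin n → List β, (∀ i, us i ∈ Ls i) ∧ w ∈ shuffle2 us }

/-- Iterated version `L^{⧢₁,*} = {ε} ∪ ⋃_{n ≥ 1} ⧢₁ⁿ(L, …, L)`. -/
def itShuffle1 {β : Type*} (L : Set (List β)) : Set (List β) :=
  {([] : List β)} ∪ ⋃ (n : ℕ) (_ : 1 ≤ n), shuffle1L (fun _ : Fin n => L)

/-- Iterated version `L^{⧢₂,*} = {ε} ∪ ⋃_{n ≥ 1} ⧢₂ⁿ(L, …, L)`. -/
def itShuffle2 {β : Type*} (L : Set (List β)) : Set (List β) :=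
  {([] : List β)} ∪ ⋃ (n : ℕ) (_ : 1 ≤ n), shuffle2L (fun _ : Fin n => L)

/-- `IsShuffle u v w` : `w` is an interleaving of `u` and `v`
(ordinary shuffle of words). -/
inductive IsShuffle {β : Type*} : List β → List β → List β → Prop
  | nil : IsShuffle [] [] []
  | left {a : β} {u v w : List β} : IsShuffle u v w → IsShuffle (a :: u) v (a :: w)
  | right {a : β} {u v w : List β} : IsShuffle u v w → IsShuffle u (a :: v) (a :: w)

/-- Ordinary shuffle of languages `U ⧢ V`. -/
def shuffleL {β : Type*} (U V : Set (List β)) : Set (List β) :=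
  { w | ∃ u ∈ U, ∃ v ∈ V, IsShuffle u v w }

/-- `n`-fold ordinary shuffle `L₁ ⧢ ⋯ ⧢ Lₙ` (iterated binary shuffle;
`{ε}` is the neutral element). -/
def shuffleN {β : Type*} {n : ℕ} (Ls : Fin n → Set (List β)) : Set (List β) :=
  (List.ofFn Ls).foldr shuffleL {([] : List β)}

/-- Iterated ordinary shuffle closure `L^{⧢,*}`. -/
def itShuffleO {β : Type*} (L : Set (List β)) : Set (List β) :=
  {([] : List β)} ∪ ⋃ (n : ℕ) (_ : 1 ≤ n), shuffleN (fun _ : Fin n => L)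

/-- Bérard's binary initial literal shuffle of languages. -/
def berardShuffle1 {β : Type*} (U V : Set (List β)) : Set (List β) :=
  { w | (∃ x y v, x ++ y ∈ U ∧ v ∈ V ∧ x.length = v.length ∧ w = interleave [x, v] ++ y) ∨
        (∃ u x y, u ∈ U ∧ x ++ y ∈ V ∧ x.length = u.length ∧ w = interleave [u, x] ++ y) }

/-- A three-letter alphabet `Σ = {a, b, c}`. -/
inductive ABC : Type
  | a | b | c
deriving DecidableEq

/-! ### Columns of a transposed list of words -/

/-- The monadic pass inside `List.transpose`, when the new word has one letter for each column. -/
theorem mapM_pop {β : Type*} (cs : List (List β)) (l : List β) (h : l.length = cs.length) :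
    cs.mapM (m := StateM (List β)) List.transpose.pop l = (List.zipWith List.cons l cs, []) := by
  induction cs generalizing l with
  | nil =>
    obtain rfl : l = [] := by simpa using h
    rfl
  | cons c cs ih =>
    cases l with
    | nil => simp at h
    | cons a l =>
      have := ih l (by simpa using h)
      rw [List.mapM_cons]
      change (do
        let bs ← cs.mapM (m := StateM (List β)) List.transpose.pop
        pure ((a :: c) :: bs) : StateM (List β) _) l = _
      change (((a :: c) :: (cs.mapM (m := StateM (List β)) List.transpose.pop l).1),
        (cs.mapM (m := StateM (List β)) List.transpose.pop l).2) = _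
      rw [this]
      rfl

/-- `List.transpose.go` puts one letter of the new word on top of each of the existing columns. -/
theorem go_toList {β : Type*} (cs : Array (List β)) (l : List β) (h : l.length = cs.size) :
    (List.transpose.go l cs).toList = List.zipWith List.cons l cs.toList := by
  have key : cs.mapM (m := StateM (List β)) List.transpose.pop l
      = ((List.zipWith List.cons l cs.toList).toArray, []) := by
    rw [Array.mapM_eq_mapM_toList]
    change ((cs.toList.mapM (m := StateM (List β)) List.transpose.pop l).1.toArray,
      (cs.toList.mapM (m := StateM (List β)) List.transpose.pop l).2) = _
    rw [mapM_pop _ _ (by simpa using h)]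
  unfold List.transpose.go
  rw [key]
  rfl

theorem go_empty {β : Type*} (l : List β) :
    (List.transpose.go l #[]).toList = l.map fun a => [a] := by
  have key : (#[] : Array (List β)).mapM (m := StateM (List β)) List.transpose.pop l
      = (#[], l) := by
    rw [Array.mapM_eq_mapM_toList]
    rfl
  unfold List.transpose.go
  rw [key]
  simp

theorem transpose_cons {β : Type*} (l : List β) (ls : List (List β)) :
    (l :: ls).transpose = (List.transpose.go l (ls.foldr List.transpose.go #[])).toList := rfl

/-- For words of the same length `L`, the transpose lists the columns. It is false for the empty list
of words, whose transpose is empty instead of consisting of `L` empty columns. -/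
theorem transpose_eq {β : Type*} (L : ℕ) (ls : List (List β)) (hne : ls ≠ [])
    (h : ∀ v ∈ ls, v.length = L) :
    ls.transpose = (List.range L).map fun j => ls.filterMap (·[j]?) := by
  induction ls with
  | nil => exact absurd rfl hne
  | cons l ls ih =>
    have hl : l.length = L := h l (by simp)
    rw [transpose_cons]
    by_cases hls : ls = []
    · subst hls
      rw [List.foldr_nil, go_empty]
      apply List.ext_getElem
      · simp [hl]
      · intro j h1 h2
        have hj : j < l.length := by simpa using h1
        simp [List.getElem?_eq_getElem hj]
    · have ih := ih hls fun v hv => h v (by simp [hv])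
      have ih' : (ls.foldr List.transpose.go #[]).toList
        = (List.range L).map fun j => ls.filterMap (·[j]?) := ih
      have hsize : (ls.foldr List.transpose.go #[]).size = L := by
        rw [← Array.length_toList, ih']; simp
      rw [go_toList _ _ (hl.trans hsize.symm), ih']
      apply List.ext_getElem
      · simp [hl]
      · intro j h1 h2
        have hj : j < l.length := by
          have : j < L := by simpa using h2
          omega
        simp [List.getElem?_eq_getElem hj]

/-- After erasure the empty list of words needs no exception: its empty columns contribute nothing. -/
theorem reduceOption_interleave {β : Type*} (L : ℕ) (ls : List (List (Option β)))
    (h : ∀ v ∈ ls, v.length = L) :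
    (interleave ls).reduceOption
      = (List.range L).flatMap fun j => ls.filterMap fun v => v[j]?.join := by
  by_cases hne : ls = []
  · subst hne
    simp [interleave, List.transpose]
  · rw [interleave, transpose_eq L ls hne h, List.reduceOption, List.filterMap_flatten,
      List.map_map, List.flatMap_def]
    congr 1
    apply List.map_congr_left
    intro j _
    simp only [Function.comp_apply, List.filterMap_filterMap]
    rfl

/-! ### Offsets and erased words -/

/-- The letter in column `j` of the word `u` placed at offset `k` among infinitely many dollars;
`none` is the dollar. -/
def letterAt {β : Type*} (k : ℕ) (u : List β) (j : ℕ) : Option β :=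
  if j < k then none else u[j - k]?

/-- The letters in column `j`, from top to bottom and with the dollars erased, when each `us i` is
placed at offset `k i`. -/
def column {β : Type*} {n : ℕ} (us : Fin n → List β) (k : Fin n → ℕ) (j : ℕ) : List β :=
  (List.finRange n).filterMap fun i => letterAt (k i) (us i) j

/-- The erased interleaving of the words `us i` placed at offsets `k i`, read up to column `L`. -/
def shuffleWord {β : Type*} {n : ℕ} (us : Fin n → List β) (k : Fin n → ℕ) (L : ℕ) : List β :=
  (List.range L).flatMap (column us k)

/-- All erased interleavings of two-sided paddings of the words `us i` to the length `L`. -/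
def literalShuffle {β : Type*} {n : ℕ} (us : Fin n → List β) (L : ℕ) : Set (List β) :=
  { w | ∃ k : Fin n → ℕ, (∀ i, k i + (us i).length ≤ L) ∧ w = shuffleWord us k L }

theorem length_dollarPad {β : Type*} (k : ℕ) (u : List β) (r : ℕ) :
    (dollarPad k u r).length = k + u.length + r := by
  simp [dollarPad, Nat.add_assoc]

theorem letterAt_eq_none {β : Type*} {k : ℕ} {u : List β} {j : ℕ}
    (h : j < k ∨ k + u.length ≤ j) : letterAt k u j = none := by
  unfold letterAt
  split_ifs
  · rfl
  · exact List.getElem?_eq_none (by omega)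

theorem column_eq_nil {β : Type*} {n : ℕ} {us : Fin n → List β} {k : Fin n → ℕ} {j : ℕ}
    (h : ∀ i, j < k i ∨ k i + (us i).length ≤ j) : column us k j = [] := by
  simp only [column, List.filterMap_eq_nil_iff]
  exact fun i _ => letterAt_eq_none (h i)

theorem join_getElem?_dollarPad {β : Type*} (k : ℕ) (u : List β) (r j : ℕ) :
    (dollarPad k u r)[j]?.join = letterAt k u j := by
  unfold dollarPad letterAt
  rw [List.append_assoc, List.getElem?_append]
  split_ifs with h1 h2 h2
  · simp at h1
    simp [h1]
  · simp at h1
    omega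
  · simp at h1
    omega
  · rw [List.getElem?_append]
    split_ifs with h3
    · simp at h3
      simp [h3]
    · simp only [List.length_map, List.length_replicate] at h3 ⊢
      rw [List.getElem?_eq_none (l := u) (by omega), List.getElem?_replicate]
      split_ifs <;> rfl

theorem reduceOption_interleave_dollarPad {β : Type*} {n : ℕ} (us : Fin n → List β)
    (k r : Fin n → ℕ) (L : ℕ) (h : ∀ i, k i + (us i).length + r i = L) :
    (interleave (List.ofFn fun i => dollarPad (k i) (us i) (r i))).reduceOption
      = shuffleWord us k L := by
  rw [reduceOption_interleave L]
  · unfold shuffleWord column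
    congr 1
    funext j
    rw [List.ofFn_eq_map, List.filterMap_map]
    congr 1
    funext i
    exact join_getElem?_dollarPad _ _ _ _
  · intro v hv
    obtain ⟨i, rfl⟩ := (List.mem_ofFn' _ _).1 hv
    rw [length_dollarPad, h]

/-! ### Independence of the padding length -/

theorem shuffleWord_of_le {β : Type*} {n : ℕ} (us : Fin n → List β) (k : Fin n → ℕ) {L M : ℕ}
    (h : ∀ i, k i + (us i).length ≤ L) (hLM : L ≤ M) :
    shuffleWord us k M = shuffleWord us k L := by
  induction M, hLM using Nat.le_induction with
  | base => rfl
  | succ M hM ih =>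
    rw [← ih, shuffleWord, List.range_succ, List.flatMap_append]
    have : column us k M = [] := column_eq_nil fun i => Or.inr ((h i).trans hM)
    simp [this, shuffleWord]

/-- If there are more columns than letters, some column contains only dollars. -/
theorem exists_empty_column {β : Type*} {n : ℕ} (us : Fin n → List β) (k : Fin n → ℕ) {L : ℕ}
    (hL : ∑ i, (us i).length < L) :
    ∃ j < L, ∀ i, j < k i ∨ k i + (us i).length ≤ j := by
  by_contra! hcon
  have hsub : Finset.range L ⊆
      Finset.univ.biUnion fun i => Finset.Ico (k i) (k i + (us i).length) := by
    intro j hj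
    obtain ⟨i, hi⟩ := hcon j (Finset.mem_range.1 hj)
    exact Finset.mem_biUnion.2 ⟨i, Finset.mem_univ i, Finset.mem_Ico.2 hi⟩
  have h1 := (Finset.card_le_card hsub).trans Finset.card_biUnion_le
  simp at h1
  omega

/-- Deleting a column without letters shortens the padding by one. -/
theorem exists_offsets_pred {β : Type*} {n : ℕ} (us : Fin n → List β) (k : Fin n → ℕ) {L : ℕ}
    (hL : ∑ i, (us i).length ≤ L) (hk : ∀ i, k i + (us i).length ≤ L + 1) :
    ∃ k' : Fin n → ℕ, (∀ i, k' i + (us i).length ≤ L) ∧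
      shuffleWord us k (L + 1) = shuffleWord us k' L := by
  obtain ⟨j, hj, hempty⟩ := exists_empty_column us k (Nat.lt_succ_of_le hL)
  let k' : Fin n → ℕ := fun i => if j < k i then k i - 1 else k i
  refine ⟨k', fun i => ?_, ?_⟩
  · have := hempty i
    have := hk i
    simp only [k']
    split_ifs <;> omega
  have hlow : ∀ c < j, column us k c = column us k' c := by
    intro c hc
    unfold column
    congr 1
    funext i
    simp only [k']
    split_ifs with h
    · rw [letterAt_eq_none (Or.inl (by omega)), letterAt_eq_none (Or.inl (by omega))]
    · rfl
  have hhigh : ∀ c, j ≤ c → column us k (c + 1) = column us k' c := by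
    intro c hc
    unfold column
    congr 1
    funext i
    have := hempty i
    simp only [k']
    split_ifs with h
    · unfold letterAt
      have e : c + 1 - k i = c - (k i - 1) := by omega
      rw [e]
      exact if_congr (by omega) rfl rfl
    · rw [letterAt_eq_none (Or.inr (by omega)), letterAt_eq_none (Or.inr (by omega))]
  obtain ⟨m, rfl⟩ : ∃ m, L = j + m := ⟨L - j, by omega⟩
  have e1 : List.range (j + m + 1)
      = List.range j ++ [j] ++ (List.range m).map fun c => j + c + 1 := by
    rw [show j + m + 1 = (j + 1) + m by omega, List.range_add, List.range_succ]
    congr 1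
    apply List.map_congr_left
    intro c _
    omega
  unfold shuffleWord
  rw [e1, List.range_add]
  simp only [List.flatMap_append, List.flatMap_map, List.flatMap_singleton,
    column_eq_nil hempty, List.append_nil]
  congr 1
  · simp only [List.flatMap_def]
    congr 1
    exact List.map_congr_left fun c hc => hlow c (List.mem_range.1 hc)
  · congr 1
    funext c
    exact hhigh (j + c) (by omega)

theorem literalShuffle_succ {β : Type*} {n : ℕ} (us : Fin n → List β) {L : ℕ}
    (hL : ∑ i, (us i).length ≤ L) : literalShuffle us (L + 1) = literalShuffle us L := by
  ext w
  constructor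
  · rintro ⟨k, hk, rfl⟩
    exact exists_offsets_pred us k hL hk
  · rintro ⟨k, hk, rfl⟩
    exact ⟨k, fun i => (hk i).trans L.le_succ, (shuffleWord_of_le us k hk L.le_succ).symm⟩

theorem literalShuffle_eq_sum {β : Type*} {n : ℕ} (us : Fin n → List β) {L : ℕ}
    (hL : ∑ i, (us i).length ≤ L) :
    literalShuffle us L = literalShuffle us (∑ i, (us i).length) := by
  induction L, hL using Nat.le_induction with
  | base => rfl
  | succ L hL ih => rw [literalShuffle_succ us hL, ih]

theorem shuffle2_eq {β : Type*} {n : ℕ} (us : Fin n → List β) :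
    shuffle2 us = literalShuffle us (n * Finset.univ.sup fun j => (us j).length) := by
  -- The truncated subtraction `n * max - |us i|` in `shuffle2` is a genuine one.
  have hle : ∀ i, (us i).length ≤ n * Finset.univ.sup fun j => (us j).length := fun i =>
    (Finset.le_sup (f := fun j => (us j).length) (Finset.mem_univ i)).trans
      (Nat.le_mul_of_pos_left _ i.pos)
  ext w
  constructor
  · rintro ⟨k, hk, rfl⟩
    refine ⟨k, fun i => ?_, reduceOption_interleave_dollarPad us k _ _ fun i => ?_⟩ <;>
    · have := hk i
      have := hle i
      omega
  · rintro ⟨k, hk, rfl⟩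
    refine ⟨k, fun i => ?_, (reduceOption_interleave_dollarPad us k _ _ fun i => ?_).symm⟩ <;>
    · have := hk i
      omega

/-- For `N > |u₁| + … + |uₙ|`, the `n`-ary literal shuffle
equals the set of `h`-images of perfect interleavings of two-sided dollar
paddings of the `uᵢ` to the common length `N`. -/
theorem stmt0 {α : Type*} {n : ℕ} (us : Fin n → List α) (N : ℕ)
    (hN : N > ∑ i, (us i).length) :
    shuffle2 us =
      { w | ∃ vs : Fin n → List (Option α),
          (∀ i, (∃ a b, vs i = dollarPad a (us i) b) ∧ (vs i).length = N) ∧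
          w = (interleave (List.ofFn vs)).reduceOption } := by
  have hsum : ∑ i, (us i).length ≤ n * Finset.univ.sup fun j => (us j).length := by
    simpa using Finset.sum_le_card_nsmul Finset.univ (fun i => (us i).length) _
      fun i hi => Finset.le_sup (f := fun j => (us j).length) hi
  rw [shuffle2_eq, literalShuffle_eq_sum us hsum, ← literalShuffle_eq_sum us hN.le]
  ext w
  constructor
  · rintro ⟨k, hk, rfl⟩
    have hr : ∀ i, k i + (us i).length + (N - (k i + (us i).length)) = N := fun i =>
      Nat.add_sub_cancel' (hk i)
    exact ⟨fun i => dollarPad (k i) (us i) (N - (k i + (us i).length)),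
      fun i => ⟨⟨_, _, rfl⟩, (length_dollarPad _ _ _).trans (hr i)⟩,
      (reduceOption_interleave_dollarPad us k _ N hr).symm⟩
  · rintro ⟨vs, hvs, rfl⟩
    choose hpad hlen using hvs
    choose k r hkr using hpad
    obtain rfl : vs = fun i => dollarPad (k i) (us i) (r i) := funext hkr
    have hN' : ∀ i, k i + (us i).length + r i = N := fun i => by
      rw [← length_dollarPad, hlen i]
    exact ⟨k, fun i => by have := hN' i; omega,
      reduceOption_interleave_dollarPad us k r N hN'⟩
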